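/- Inframultiplicativity (norm 1 case): let f, g ∈ ℤ[θ] be nonzero. (1) If f, g ∈ O_K⁰ then |f|_θ·|g|_θ ≤ |f·g|_θ ≤ θ·|f|_θ·|g|_θ. (2) If f, g ∈ O_K¹ then |f|_θ·|g|_θ ≤ |f·g|_θ ≤ θ²·|f|_θ·|g|_θ. (3) If f ∈ O_K⁰ and g ∈ O_K¹ then |f|_θ·|g|_θ ≤ |f·g|_θ ≤ θ·|f|_θ·|g|_θ. -/

import Mathlib

/-! The theorem holds because the infranorm can be read off the Galois conjugate: for nonzero `x` with
`x x' > 0`, `|x|_θ = θ ^ m` where `θ ^ m ≤ |x'| < θ ^ (m + 1)` (`thNorm_of_pos`). For `x x' < 0` the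
same holds with `x'` replaced by `T' x'`, where `|T'| = 1 - θ⁻¹` (`thNorm_of_neg`). As
`θ⁻¹ ≤ (1 - θ⁻¹)² ≤ 1`, the three inequalities then compare integer parts of `log_θ`.

To read off the infranorm, take `x, x' > 0`.
* Up to a power of `θ`, `x = p + q θ` with `p, q ≥ 0` (`exists_digits`), so `x` is a finite sum of
  powers `θ ^ i` with natural multiplicities `b i`.
* Choose such a `b` with least digit sum. It is admissible (`exists_admissible`): a digit `≥ a` could
  be lowered by `a θ^i = θ^(i+1) + θ^(i-1)`, and a forbidden block on `[i, j]` has total value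
  `θ^(j+1) + θ^(i-1)`; both replacements decrease the digit sum.
* Conjugation reverses the digits, and admissibility is invariant under reversal. Hence an
  admissible sum from index `k` on has conjugate `< θ ^ (1 - k)` (`admissible_sum_lt`), while the
  conjugate is `≥ θ ^ (-k)` if the lowest digit sits at `k`. So the maximum defining `v(x)` is the
  lowest index of the digits of `x`. -/

noncomputable section

/-- The real quadratic unit `θ = (a + √(a²−4))/2`, the larger root of `θ² = aθ − 1`
(the norm `N(θ) = 1` case, `a ≥ 3`). -/
def theta1 (a : ℕ) : ℝ := ((a : ℝ) + Real.sqrt ((a : ℝ) ^ 2 - 4)) / 2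

/-- Membership in the ring `ℤ[θ]`. -/
def inR1 (a : ℕ) (x : ℝ) : Prop := ∃ p q : ℤ, x = (p : ℝ) + (q : ℝ) * theta1 a

/-- A finite integer sequence, supported in `[m, M]`, is admissible (norm `1` case) if all its
entries lie in `{0, …, a−1}` and it contains no forbidden block: no indices `i < j` with
`b_i = b_j = a−1` and `b_k = a−2` for all `i < k < j`. -/
def AdmissibleOn1 (a : ℕ) (m M : ℤ) (b : ℤ → ℤ) : Prop :=
  (∀ i, b i ≠ 0 → m ≤ i ∧ i ≤ M) ∧
  (∀ i, 0 ≤ b i ∧ b i ≤ (a : ℤ) - 1) ∧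
  ¬ ∃ i j : ℤ, i < j ∧ b i = (a : ℤ) - 1 ∧ b j = (a : ℤ) - 1 ∧
      ∀ k, i < k → k < j → b k = (a : ℤ) - 2

/-- The set `ℤ_θ` of θ-integers: signed sums `± Σ_{i=0}^{M} b_i θ^i` with `(b_i)` admissible. -/
def Ztheta1 (a : ℕ) : Set ℝ :=
  { x | ∃ (ε : ℤ) (M : ℤ) (b : ℤ → ℤ), (ε = 1 ∨ ε = -1) ∧ 0 ≤ M ∧
      AdmissibleOn1 a 0 M b ∧
      x = (ε : ℝ) * ∑ i ∈ Finset.Icc (0 : ℤ) M, (b i : ℝ) * theta1 a ^ i }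

/-- `x ∈ O_K⁰`: `x ∈ ℤ[θ]` and `x` has the same sign as its Galois conjugate `x'`. -/
def inOK0 (a : ℕ) (x : ℝ) : Prop :=
  ∃ p q : ℤ, x = (p : ℝ) + (q : ℝ) * theta1 a ∧
    0 ≤ x * ((p : ℝ) + (q : ℝ) * (theta1 a)⁻¹)

/-- `x ∈ O_K¹`: `x ∈ ℤ[θ]` and `x` has sign opposite to its Galois conjugate `x'`. -/
def inOK1 (a : ℕ) (x : ℝ) : Prop :=
  ∃ p q : ℤ, x = (p : ℝ) + (q : ℝ) * theta1 a ∧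
    x * ((p : ℝ) + (q : ℝ) * (theta1 a)⁻¹) ≤ 0

/-- `v(x) = max { k : ℤ | x / θ^k ∈ ℤ_θ }` (as a supremum in `ℤ`). -/
def vval1 (a : ℕ) (x : ℝ) : ℤ := sSup { k : ℤ | x / theta1 a ^ k ∈ Ztheta1 a }

open Classical in
/-- The θ-adic infranorm (norm `1` case): for nonzero `x ∈ O_K⁰` it is `θ^{−v(x)}`, and for
nonzero `x ∈ O_K¹` it is `|T·x|_θ` where `T = θ − 1`; `|0|_θ = 0`. -/
def thNorm1 (a : ℕ) (x : ℝ) : ℝ :=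
  if x = 0 then 0
  else if inOK0 a x then theta1 a ^ (-vval1 a x)
  else theta1 a ^ (-vval1 a ((theta1 a - 1) * x))

/-- A sequence in `ℝ` is `|·|_θ`-Cauchy. -/
def IsThCauchy1 (a : ℕ) (x : ℕ → ℝ) : Prop :=
  ∀ ε : ℝ, 0 < ε → ∃ N : ℕ, ∀ i j : ℕ, N ≤ i → N ≤ j → thNorm1 a (x i - x j) < ε

/-! ### The unit `θ` and conjugation -/

lemma theta_sq (a : ℕ) (ha : 3 ≤ a) : theta1 a ^ 2 = a * theta1 a - 1 := by
  have h3 : (3 : ℝ) ≤ a := by exact_mod_cast ha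
  have h := Real.sq_sqrt (show (0 : ℝ) ≤ (a : ℝ) ^ 2 - 4 by nlinarith)
  unfold theta1
  nlinarith

lemma theta_gt (a : ℕ) (ha : 3 ≤ a) : 1 < theta1 a := by
  have h3 : (3 : ℝ) ≤ a := by exact_mod_cast ha
  have h := Real.sqrt_nonneg ((a : ℝ) ^ 2 - 4)
  unfold theta1
  linarith

lemma theta_inv (a : ℕ) (ha : 3 ≤ a) : (theta1 a)⁻¹ = a - theta1 a := by
  have h1 := theta_gt a ha
  have h2 := theta_sq a ha
  rw [inv_eq_iff_eq_inv, eq_comm, inv_eq_iff_eq_inv, eq_comm]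
  apply inv_eq_of_mul_eq_one_right
  nlinarith

lemma theta_irr (a : ℕ) (ha : 3 ≤ a) : Irrational (theta1 a) := by
  have h : Irrational (Real.sqrt ((a ^ 2 - 4 : ℕ) : ℝ)) := by
    rw [irrational_sqrt_natCast_iff]
    rintro ⟨r, hr⟩
    have h4 : 4 ≤ a ^ 2 := by nlinarith
    have h5 : r * r + 4 = a ^ 2 := by omega
    have h6 : r < a := by nlinarith
    have h7 : r + 1 ≤ a := h6
    nlinarith
  have h4 : 4 ≤ a ^ 2 := by nlinarith
  rw [Nat.cast_sub h4] at h
  push_cast at h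
  intro ⟨r, hr⟩
  apply h
  refine ⟨2 * r - a, ?_⟩
  push_cast
  rw [hr]
  unfold theta1
  ring

lemma theta_indep (a : ℕ) (ha : 3 ≤ a) (p q : ℤ) (h : (p : ℝ) + q * theta1 a = 0) :
    p = 0 ∧ q = 0 := by
  have hq : q = 0 := by
    by_contra hq
    have hq' : (q : ℝ) ≠ 0 := by exact_mod_cast hq
    apply theta_irr a ha
    refine ⟨-(p : ℚ) / q, ?_⟩
    push_cast
    field_simp
    linarith
  subst hq
  simp at h
  exact ⟨h, rfl⟩

/-- `x ∈ ℤ[θ]` and `y` is its Galois conjugate. -/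
def ConjPair (a : ℕ) (x y : ℝ) : Prop :=
  ∃ p q : ℤ, x = (p : ℝ) + (q : ℝ) * theta1 a ∧ y = (p : ℝ) + (q : ℝ) * (theta1 a)⁻¹

namespace ConjPair

variable {a : ℕ} {x y z w : ℝ}

lemma unique (ha : 3 ≤ a) (h : ConjPair a x y) (h' : ConjPair a x z) : y = z := by
  obtain ⟨p, q, rfl, rfl⟩ := h
  obtain ⟨r, s, h1, rfl⟩ := h'
  have := theta_indep a ha (p - r) (q - s) (by push_cast; linarith)
  have h2 : p = r := by omega
  have h3 : q = s := by omega
  rw [h2, h3]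

lemma ne_zero (ha : 3 ≤ a) (h : ConjPair a x y) (hx : x ≠ 0) : y ≠ 0 := by
  obtain ⟨p, q, rfl, rfl⟩ := h
  intro h0
  have h1 := theta_gt a ha
  have := theta_indep a ha q p (by
    have : (theta1 a) ≠ 0 := by positivity
    field_simp at h0
    linarith)
  simp [this.1, this.2] at hx

lemma mul (ha : 3 ≤ a) (h : ConjPair a x y) (h' : ConjPair a z w) :
    ConjPair a (x * z) (y * w) := by
  obtain ⟨p, q, rfl, rfl⟩ := h
  obtain ⟨r, s, rfl, rfl⟩ := h'
  have h2 := theta_sq a ha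
  have h3 := theta_inv a ha
  refine ⟨p * r - q * s, p * s + q * r + a * q * s, ?_, ?_⟩
  · push_cast
    linear_combination (q * s : ℝ) * h2
  · rw [h3]
    push_cast
    linear_combination (q * s : ℝ) * h2

lemma add (h : ConjPair a x y) (h' : ConjPair a z w) : ConjPair a (x + z) (y + w) := by
  obtain ⟨p, q, rfl, rfl⟩ := h
  obtain ⟨r, s, rfl, rfl⟩ := h'
  exact ⟨p + r, q + s, by push_cast; ring, by push_cast; ring⟩

lemma neg (h : ConjPair a x y) : ConjPair a (-x) (-y) := by
  obtain ⟨p, q, rfl, rfl⟩ := h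
  exact ⟨-p, -q, by push_cast; ring, by push_cast; ring⟩

lemma int (n : ℤ) : ConjPair a n n := ⟨n, 0, by simp, by simp⟩

lemma theta : ConjPair a (theta1 a) (theta1 a)⁻¹ := ⟨0, 1, by simp, by simp⟩

lemma theta' (ha : 3 ≤ a) : ConjPair a (theta1 a)⁻¹ (theta1 a) :=
  ⟨a, -1, by rw [theta_inv a ha]; push_cast; ring, by rw [theta_inv a ha]; push_cast; ring⟩

lemma zpow (ha : 3 ≤ a) (n : ℤ) : ConjPair a (theta1 a ^ n) (theta1 a ^ (-n)) := by
  have h0 : theta1 a ≠ 0 := (zero_lt_one.trans (theta_gt a ha)).ne'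
  induction n using Int.induction_on with
  | zero => simpa using int (a := a) 1
  | succ n ih =>
    rw [zpow_add_one₀ h0, neg_add, ← sub_eq_add_neg, zpow_sub_one₀ h0]
    exact ih.mul ha theta
  | pred n ih =>
    rw [zpow_sub_one₀ h0, neg_sub, sub_neg_eq_add, add_comm, zpow_add_one₀ h0]
    rw [neg_neg] at ih
    exact ih.mul ha (theta' ha)

lemma sum {ι : Type*} (s : Finset ι) (u v : ι → ℝ) (h : ∀ i ∈ s, ConjPair a (u i) (v i)) :
    ConjPair a (∑ i ∈ s, u i) (∑ i ∈ s, v i) := by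
  classical
  induction s using Finset.induction_on with
  | empty => simpa using int (a := a) 0
  | insert i s hi ih =>
    rw [Finset.sum_insert hi, Finset.sum_insert hi]
    exact (h i (by simp)).add (ih fun j hj => h j (by simp [hj]))

end ConjPair

/-! ### Admissible sums -/

/-- The second bound, for sequences that may follow a digit `a - 1`, makes the induction work: a
leading digit `a - 1` forces the rest to satisfy the stronger hypothesis, and a digit `a - 2` passes
that hypothesis on. -/
lemma admissible_sum_lt (a : ℕ) (ha : 3 ≤ a) (n : ℕ) : ∀ c : ℕ → ℤ,
    (∀ i, c i ≤ (a : ℤ) - 1) →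
    (¬ ∃ i j : ℕ, i < j ∧ c i = (a : ℤ) - 1 ∧ c j = (a : ℤ) - 1 ∧
      ∀ k, i < k → k < j → c k = (a : ℤ) - 2) →
    (∑ i ∈ Finset.range n, (c i : ℝ) * theta1 a ^ (-(i : ℤ)) < theta1 a ∧
     ((¬ ∃ j : ℕ, c j = (a : ℤ) - 1 ∧ ∀ k < j, c k = (a : ℤ) - 2) →
      ∑ i ∈ Finset.range n, (c i : ℝ) * theta1 a ^ (-(i : ℤ)) < theta1 a - 1)) := by
  have h1 := theta_gt a ha
  have h0 : theta1 a ≠ 0 := by positivity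
  have hi := theta_inv a ha
  have hi1 : (theta1 a)⁻¹ < 1 := inv_lt_one_of_one_lt₀ h1
  have hi0 : 0 < (theta1 a)⁻¹ := by positivity
  have hm : theta1 a * (theta1 a)⁻¹ = 1 := mul_inv_cancel₀ h0
  induction n with
  | zero => intro c _ _; simp; constructor <;> intros <;> linarith
  | succ n ih =>
    intro c hb hf
    have hs : ∑ i ∈ Finset.range (n + 1), (c i : ℝ) * theta1 a ^ (-(i : ℤ)) =
        (∑ i ∈ Finset.range n, (c (i + 1) : ℝ) * theta1 a ^ (-(i : ℤ))) * (theta1 a)⁻¹ + c 0 := by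
      rw [Finset.sum_range_succ', Finset.sum_mul]
      simp only [Nat.cast_zero, neg_zero, zpow_zero, mul_one, add_left_inj]
      refine Finset.sum_congr rfl fun i _ => ?_
      push_cast
      rw [neg_add, ← sub_eq_add_neg, zpow_sub_one₀ h0]
      ring
    obtain ⟨ih1, ih2⟩ := ih (fun i => c (i + 1)) (fun i => hb _) (by
      rintro ⟨i, j, hij, h2, h3, h4⟩
      refine hf ⟨i + 1, j + 1, by omega, h2, h3, fun k hk1 hk2 => ?_⟩
      have := h4 (k - 1) (by omega) (by omega)
      simpa [Nat.sub_add_cancel (show 1 ≤ k by omega)] using this)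
    rw [hs]
    set S := ∑ i ∈ Finset.range n, (c (i + 1) : ℝ) * theta1 a ^ (-(i : ℤ)) with hS
    have ih1' : S * (theta1 a)⁻¹ < 1 := by
      have := mul_lt_mul_of_pos_right ih1 hi0
      linarith
    have ih2' : (¬ ∃ j : ℕ, c (j + 1) = (a : ℤ) - 1 ∧ ∀ k < j, c (k + 1) = (a : ℤ) - 2) →
        S * (theta1 a)⁻¹ < 1 - (theta1 a)⁻¹ := by
      intro h
      have := mul_lt_mul_of_pos_right (ih2 h) hi0
      linarith
    constructor
    · rcases lt_or_eq_of_le (hb 0) with h | h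
      · have h' : (c 0 : ℝ) ≤ a - 2 := by
          have : c 0 ≤ (a : ℤ) - 2 := by omega
          exact_mod_cast this
        linarith
      · have := ih2' (by
          rintro ⟨j, hj, hk⟩
          refine hf ⟨0, j + 1, by omega, h, hj, fun k hk1 hk2 => ?_⟩
          have := hk (k - 1) (by omega)
          simpa [Nat.sub_add_cancel (show 1 ≤ k by omega)] using this)
        have h' : (c 0 : ℝ) = a - 1 := by exact_mod_cast h
        linarith
    · intro hp
      have hne : c 0 ≠ (a : ℤ) - 1 := fun h => hp ⟨0, h, by simp⟩
      have hle := hb 0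
      by_cases h : c 0 = (a : ℤ) - 2
      · have := ih2' (by
          rintro ⟨j, hj, hk⟩
          refine hp ⟨j + 1, hj, fun k hk2 => ?_⟩
          rcases Nat.eq_zero_or_pos k with rfl | hk1
          · exact h
          have := hk (k - 1) (by omega)
          simpa [Nat.sub_add_cancel (show 1 ≤ k by omega)] using this)
        have h' : (c 0 : ℝ) = a - 2 := by exact_mod_cast h
        linarith
      · have h' : (c 0 : ℝ) ≤ a - 3 := by
          have : c 0 ≤ (a : ℤ) - 3 := by omega
          exact_mod_cast this
        linarith

lemma Ztheta_neg (a : ℕ) (x : ℝ) (h : x ∈ Ztheta1 a) : -x ∈ Ztheta1 a := by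
  obtain ⟨ε, M, b, hε, hM, hb, rfl⟩ := h
  refine ⟨-ε, M, b, by omega, hM, hb, by push_cast; ring⟩

lemma vval_neg (a : ℕ) (x : ℝ) : vval1 a (-x) = vval1 a x := by
  unfold vval1
  congr 1
  ext k
  constructor <;> intro h
  · have := Ztheta_neg a _ h
    rw [neg_div, neg_neg] at this
    exact this
  · have := Ztheta_neg a _ h
    rw [← neg_div] at this
    exact this

lemma Ztheta_conj_lt (a : ℕ) (ha : 3 ≤ a) (x y : ℝ) (hx : 0 < x) (hxy : ConjPair a x y)
    (h : x ∈ Ztheta1 a) : y < theta1 a := by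
  obtain ⟨ε, M, b, hε, hM, ⟨-, hb, hf⟩, rfl⟩ := h
  have h1 := theta_gt a ha
  have hnn : 0 ≤ ∑ i ∈ Finset.Icc (0 : ℤ) M, (b i : ℝ) * theta1 a ^ i := by
    refine Finset.sum_nonneg fun i _ => ?_
    have : (0 : ℝ) ≤ b i := by exact_mod_cast (hb i).1
    positivity
  have hε1 : ε = 1 := by
    rcases hε with h | h
    · exact h
    · subst h
      push_cast at hx
      linarith
  subst hε1
  have hc : ConjPair a (((1 : ℤ) : ℝ) * ∑ i ∈ Finset.Icc (0 : ℤ) M, (b i : ℝ) * theta1 a ^ i)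
      (∑ i ∈ Finset.Icc (0 : ℤ) M, (b i : ℝ) * theta1 a ^ (-i)) := by
    rw [Int.cast_one, one_mul]
    exact ConjPair.sum _ _ _ fun i _ => (ConjPair.int (b i)).mul ha (ConjPair.zpow ha i)
  rw [hxy.unique ha hc]
  have hre : ∑ i ∈ Finset.Icc (0 : ℤ) M, (b i : ℝ) * theta1 a ^ (-i) =
      ∑ i ∈ Finset.range (M.toNat + 1), (b (i : ℤ) : ℝ) * theta1 a ^ (-(i : ℤ)) := by
    symm
    refine Finset.sum_bij (fun i _ => (i : ℤ)) ?_ ?_ ?_ ?_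
    · intro i hi
      simp at hi ⊢
      omega
    · intro i _ j _ h
      exact_mod_cast h
    · intro i hi
      simp at hi
      exact ⟨i.toNat, by simp; omega, by omega⟩
    · intro i _
      rfl
  rw [hre]
  refine (admissible_sum_lt a ha _ (fun i => b (i : ℤ)) (fun i => (hb _).2) ?_).1
  rintro ⟨i, j, hij, h2, h3, h4⟩
  refine hf ⟨i, j, by omega, h2, h3, fun k hk1 hk2 => ?_⟩
  have := h4 k.toNat (by omega) (by omega)
  rwa [Int.toNat_of_nonneg (by omega)] at this

/-! ### Existence of admissible expansions -/

/-- Value `Σ b i * t ^ i` of a finitely supported digit sequence in base `t`. -/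
def digitVal (t : ℝ) : (ℤ →₀ ℕ) →ₗ[ℕ] ℝ := Finsupp.linearCombination ℕ (fun i : ℤ => t ^ i)

lemma digitVal_single (t : ℝ) (i : ℤ) (n : ℕ) :
    digitVal t (Finsupp.single i n) = n * t ^ i := by
  simp [digitVal]

/-- The power `θ ^ n` is chosen with `x / x' ∈ [θ^(2n), θ^(2n+2))`; in the basis `θ^n, θ^(n+1)` both
coordinates of `x` are then nonnegative. -/
lemma exists_digits (a : ℕ) (ha : 3 ≤ a) (x y : ℝ) (hxy : ConjPair a x y) (hx : 0 < x)
    (hy : 0 < y) : ∃ b : ℤ →₀ ℕ, digitVal (theta1 a) b = x := by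
  have h1 := theta_gt a ha
  have h0 : theta1 a ≠ 0 := by positivity
  have hpos : 0 < theta1 a := by positivity
  obtain ⟨n, hn1, hn2⟩ := exists_mem_Ico_zpow (x := x / y) (y := theta1 a ^ 2) (by positivity)
    (by nlinarith)
  obtain ⟨p, q, h2, h3⟩ := hxy.mul ha (ConjPair.zpow ha (-n))
  rw [neg_neg] at h3
  have hu : (theta1 a ^ n) * theta1 a ^ (-n) = 1 := by
    rw [← zpow_add₀ h0]; simp
  have hsq : (theta1 a ^ 2) ^ n = theta1 a ^ n * theta1 a ^ n := by
    rw [← mul_zpow, sq]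
  rw [zpow_add_one₀ (by positivity), hsq, div_lt_iff₀ hy] at hn2
  rw [hsq, le_div_iff₀ hy] at hn1
  have hk : 0 < theta1 a ^ (-n) := by positivity
  have e1 : y * theta1 a ^ n ≤ x * theta1 a ^ (-n) := by
    calc y * theta1 a ^ n = (theta1 a ^ n * theta1 a ^ n * y) * theta1 a ^ (-n) := by
          linear_combination (-(y * theta1 a ^ n)) * hu
      _ ≤ _ := by gcongr
  have e2 : x * theta1 a ^ (-n) < theta1 a ^ 2 * (y * theta1 a ^ n) := by
    calc _ < (theta1 a ^ n * theta1 a ^ n * theta1 a ^ 2 * y) * theta1 a ^ (-n) := by gcongr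
      _ = _ := by linear_combination ((y * theta1 a ^ n * theta1 a ^ 2)) * hu
  rw [h2, h3] at e1 e2
  have hi1 : (theta1 a)⁻¹ < 1 := inv_lt_one_of_one_lt₀ h1
  have hm : theta1 a * (theta1 a)⁻¹ = 1 := mul_inv_cancel₀ h0
  have hq : 0 ≤ q := by
    have : (0 : ℝ) ≤ q := by
      by_contra hq
      push Not at hq
      nlinarith
    exact_mod_cast this
  have hp : 0 ≤ p := by
    have : (0 : ℝ) ≤ p := by
      have e3 : theta1 a ^ 2 * ((p : ℝ) + q * (theta1 a)⁻¹) = theta1 a ^ 2 * p + q * theta1 a := by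
        linear_combination ((q : ℝ) * theta1 a) * hm
      rw [e3] at e2
      have e4 : 0 < (p : ℝ) * (theta1 a ^ 2 - 1) := by linarith
      exact (pos_of_mul_pos_left e4 (by nlinarith)).le
    exact_mod_cast this
  lift p to ℕ using hp
  lift q to ℕ using hq
  refine ⟨Finsupp.single n p + Finsupp.single (n + 1) q, ?_⟩
  rw [map_add, digitVal_single, digitVal_single, zpow_add_one₀ h0]
  push_cast at h2
  linear_combination (-(theta1 a ^ n)) * h2 + x * hu

lemma exists_admissible (a : ℕ) (ha : 3 ≤ a) (x y : ℝ) (hxy : ConjPair a x y) (hx : 0 < x)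
    (hy : 0 < y) : ∃ b : ℤ →₀ ℕ, digitVal (theta1 a) b = x ∧ (∀ i, b i ≤ a - 1) ∧
      ¬ ∃ i j : ℤ, i < j ∧ b i = a - 1 ∧ b j = a - 1 ∧ ∀ k, i < k → k < j → b k = a - 2 := by
  have h1 := theta_gt a ha
  have h0 : theta1 a ≠ 0 := by positivity
  have hinv := theta_inv a ha
  obtain ⟨b, hb, hmin⟩ := (measure (fun b : ℤ →₀ ℕ => b.degree)).wf.has_min
    {b | digitVal (theta1 a) b = x} (exists_digits a ha x y hxy hx hy)
  -- A block of `b` of digit sum `> 2` cannot have the value `θ^i + θ^j`.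
  have key : ∀ (c : ℤ →₀ ℕ) (i j : ℤ), c ≤ b → 2 < c.degree →
      digitVal (theta1 a) c = theta1 a ^ i + theta1 a ^ j → False := by
    intro c i j hc hd hv
    have hbc : b - c + c = b := tsub_add_cancel_of_le hc
    refine hmin (b - c + (Finsupp.single i 1 + Finsupp.single j 1)) ?_ ?_
    · have h2 : digitVal (theta1 a) b = x := hb
      rw [← hbc, map_add, hv] at h2
      simp only [Set.mem_ofPred_eq, map_add, digitVal_single]
      rw [← h2]
      simp
    · change (b - c + (Finsupp.single i 1 + Finsupp.single j 1)).degree < b.degree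
      have h2 : (b - c + c).degree = b.degree := by rw [hbc]
      rw [map_add] at h2
      rw [map_add, map_add, Finsupp.degree_single, Finsupp.degree_single]
      omega
  refine ⟨b, hb, fun i => ?_, ?_⟩
  · by_contra hi
    refine key (Finsupp.single i a) (i + 1) (i - 1) ?_ ?_ ?_
    · rw [Finsupp.single_le_iff]; omega
    · rw [Finsupp.degree_single]; omega
    · rw [digitVal_single, zpow_add_one₀ h0, zpow_sub_one₀ h0, hinv]; ring
  · rintro ⟨i, j, hij, hbi, hbj, hk⟩
    refine key (∑ k ∈ Finset.Icc i j, Finsupp.single k (a - 2) +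
      (Finsupp.single i 1 + Finsupp.single j 1)) (j + 1) (i - 1) ?_ ?_ ?_
    · intro k
      simp only [Finsupp.add_apply, Finsupp.finsetSum_apply, Finsupp.single_apply,
        Finset.sum_ite_eq', Finset.mem_Icc]
      by_cases hki : k = i
      · subst hki
        rw [if_pos (by omega), if_pos rfl, if_neg (by omega)]
        omega
      · by_cases hkj : k = j
        · subst hkj
          rw [if_pos (by omega), if_neg (by omega), if_pos rfl]
          omega
        · rw [if_neg (Ne.symm hki), if_neg (Ne.symm hkj)]
          split_ifs with h
          · rw [hk k (by omega) (by omega)]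
            omega
          · omega
    · simp only [map_add, map_sum, Finsupp.degree_single, Finset.sum_const, smul_eq_mul]
      have : 0 < (Finset.Icc i j).card := Finset.card_pos.2 ⟨i, by simp; omega⟩
      have : 0 < (Finset.Icc i j).card * (a - 2) := Nat.mul_pos this (by omega)
      omega
    · simp only [map_add, map_sum, digitVal_single]
      -- Telescoping, as `a - 2 = θ - 2 + θ⁻¹`.
      have tel : ∀ n : ℕ, ∑ k ∈ Finset.Icc i (i + n), ((a - 2 : ℕ) : ℝ) * theta1 a ^ k =
          theta1 a ^ (i + n + 1) - theta1 a ^ (i + n) - theta1 a ^ i + theta1 a ^ (i - 1) := by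
        have ha2 : ((a - 2 : ℕ) : ℝ) = theta1 a - 2 + (theta1 a)⁻¹ := by
          rw [Nat.cast_sub (by omega), hinv]; push_cast; ring
        intro n
        rw [ha2]
        induction n with
        | zero =>
          simp only [Nat.cast_zero, add_zero, Finset.Icc_self, Finset.sum_singleton,
            zpow_add_one₀ h0, zpow_sub_one₀ h0]
          ring
        | succ n ih =>
          have : Finset.Icc i (i + (n + 1 : ℕ)) = insert (i + n + 1) (Finset.Icc i (i + n)) := by
            ext k
            simp
            omega
          rw [this, Finset.sum_insert (by simp), ih,
            show i + ((n + 1 : ℕ) : ℤ) = i + n + 1 by push_cast; ring,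
            zpow_add_one₀ h0 (i + n + 1), zpow_add_one₀ h0 (i + n)]
          have hm : theta1 a * (theta1 a)⁻¹ = 1 := mul_inv_cancel₀ h0
          linear_combination (theta1 a ^ (i + n : ℤ)) * hm
      have := tel (j - i).toNat
      rw [show i + ((j - i).toNat : ℤ) = j by omega] at this
      rw [this]
      push_cast
      ring

/-! ### The infranorm in terms of the conjugate -/

lemma vval_of_pos (a : ℕ) (ha : 3 ≤ a) (x y : ℝ) (hxy : ConjPair a x y) (hx : 0 < x)
    (hy : 0 < y) : theta1 a ^ (-vval1 a x) ≤ y ∧ y < theta1 a ^ (-vval1 a x + 1) := by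
  have h1 := theta_gt a ha
  have h0 : theta1 a ≠ 0 := by positivity
  have hupper : ∀ k : ℤ, x / theta1 a ^ k ∈ Ztheta1 a → y < theta1 a ^ (-k + 1) := by
    intro k hk
    have hp := hxy.mul ha (ConjPair.zpow ha (-k))
    rw [zpow_neg, ← div_eq_mul_inv, neg_neg] at hp
    have := Ztheta_conj_lt a ha _ _ (by positivity) hp hk
    rw [zpow_add_one₀ h0, zpow_neg, inv_mul_eq_div, lt_div_iff₀ (by positivity)]
    exact this
  obtain ⟨b, hb, hb1, hb2⟩ := exists_admissible a ha x y hxy hx hy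
  have hval : x = ∑ i ∈ b.support, (b i : ℝ) * theta1 a ^ i := by
    rw [← hb, digitVal, Finsupp.linearCombination_apply, Finsupp.sum]
    simp
  have hne : b.support.Nonempty := by
    rw [Finset.nonempty_iff_ne_empty]
    intro h
    rw [h] at hval
    simp at hval
    exact hx.ne' hval
  set n := b.support.min' hne with hn
  set N := b.support.max' hne with hN
  have hmem : n ∈ b.support := Finset.min'_mem _ _
  have hsupp : ∀ i, b i ≠ 0 → n ≤ i ∧ i ≤ N := fun i hi =>
    ⟨Finset.min'_le _ _ (by simpa using hi), Finset.le_max' _ _ (by simpa using hi)⟩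
  have hlower : theta1 a ^ (-n) ≤ y := by
    have hc : ConjPair a x (∑ i ∈ b.support, (b i : ℝ) * theta1 a ^ (-i)) := by
      rw [hval]
      exact ConjPair.sum _ _ _ fun i _ =>
        (by simpa using ConjPair.int (a := a) (b i : ℤ) : ConjPair a (b i : ℝ) (b i : ℝ)).mul ha
          (ConjPair.zpow ha i)
    rw [hxy.unique ha hc]
    calc theta1 a ^ (-n) ≤ (b n : ℝ) * theta1 a ^ (-n) := by
          have : 1 ≤ b n := Nat.one_le_iff_ne_zero.2 (by simpa using hmem)
          have : (1 : ℝ) ≤ b n := by exact_mod_cast this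
          exact le_mul_of_one_le_left (by positivity) this
      _ ≤ _ := Finset.single_le_sum (f := fun i => (b i : ℝ) * theta1 a ^ (-i))
          (fun i _ => by positivity) hmem
  have hin : x / theta1 a ^ n ∈ Ztheta1 a := by
    have hnN : n ≤ N := (hsupp n (by simpa using hmem)).2
    refine ⟨1, N - n, fun i => b (i + n), Or.inl rfl, by omega, ⟨?_, ?_, ?_⟩, ?_⟩
    · intro i hi
      dsimp only at hi
      have := hsupp (i + n) (by exact_mod_cast hi)
      omega
    · intro i
      have := hb1 (i + n)
      dsimp only
      omega
    · rintro ⟨i, j, hij, h2, h3, h4⟩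
      dsimp only at h2 h3 h4
      refine hb2 ⟨i + n, j + n, by omega, by omega, by omega, fun k hk1 hk2 => ?_⟩
      have := h4 (k - n) (by omega) (by omega)
      rw [sub_add_cancel] at this
      omega
    · rw [Int.cast_one, one_mul, hval, Finset.sum_div]
      have hsub : b.support ⊆ Finset.Icc n N := by
        intro i hi
        rw [Finset.mem_Icc]
        exact hsupp i (by simpa using hi)
      rw [Finset.sum_subset hsub (fun i _ hi => by
        have : b i = 0 := by simpa using hi
        simp [this])]
      refine Finset.sum_bij (fun i _ => i - n) ?_ ?_ ?_ ?_
      · intro i hi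
        simp at hi ⊢
        omega
      · intro i _ j _ h
        omega
      · intro i hi
        simp at hi
        exact ⟨i + n, by simp; omega, by omega⟩
      · intro i _
        dsimp only
        rw [sub_add_cancel, zpow_sub₀ h0]
        push_cast
        ring
  have hv : vval1 a x = n := by
    refine IsGreatest.csSup_eq ⟨hin, fun k hk => ?_⟩
    have := hlower.trans_lt (hupper k hk)
    rw [zpow_lt_zpow_iff_right₀ h1] at this
    omega
  rw [hv]
  exact ⟨hlower, hupper n hin⟩

lemma vval_bounds (a : ℕ) (ha : 3 ≤ a) (x y : ℝ) (hxy : ConjPair a x y) (h : 0 < x * y) :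
    theta1 a ^ (-vval1 a x) ≤ |y| ∧ |y| < theta1 a ^ (-vval1 a x + 1) := by
  rcases mul_pos_iff.1 h with ⟨hx, hy⟩ | ⟨hx, hy⟩
  · rw [abs_of_pos hy]
    exact vval_of_pos a ha x y hxy hx hy
  · rw [abs_of_neg hy, ← vval_neg]
    exact vval_of_pos a ha _ _ hxy.neg (by linarith) (by linarith)

lemma thNorm_of_pos (a : ℕ) (ha : 3 ≤ a) (x y : ℝ) (hxy : ConjPair a x y) (h : 0 < x * y) :
    ∃ m : ℤ, thNorm1 a x = theta1 a ^ m ∧ theta1 a ^ m ≤ |y| ∧ |y| < theta1 a ^ (m + 1) := by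
  refine ⟨-vval1 a x, ?_, vval_bounds a ha x y hxy h⟩
  have hx : x ≠ 0 := by rintro rfl; simp at h
  have h0 : inOK0 a x := by
    obtain ⟨p, q, h2, h3⟩ := hxy
    exact ⟨p, q, h2, by rw [← h3]; exact h.le⟩
  rw [thNorm1, if_neg hx, if_pos h0]

lemma thNorm_of_neg (a : ℕ) (ha : 3 ≤ a) (x y : ℝ) (hxy : ConjPair a x y) (h : x * y < 0) :
    ∃ m : ℤ, thNorm1 a x = theta1 a ^ m ∧ theta1 a ^ m ≤ (1 - (theta1 a)⁻¹) * |y| ∧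
      (1 - (theta1 a)⁻¹) * |y| < theta1 a ^ (m + 1) := by
  have h1 := theta_gt a ha
  have hi1 : (theta1 a)⁻¹ < 1 := inv_lt_one_of_one_lt₀ h1
  have hT : ConjPair a (theta1 a - 1) ((theta1 a)⁻¹ - 1) :=
    ⟨-1, 1, by push_cast; ring, by push_cast; ring⟩
  have hv := vval_bounds a ha _ _ (hT.mul ha hxy) (by
    have : 0 < (theta1 a - 1) * (1 - (theta1 a)⁻¹) := mul_pos (by linarith) (by linarith)
    nlinarith)
  have habs : |((theta1 a)⁻¹ - 1) * y| = (1 - (theta1 a)⁻¹) * |y| := by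
    rw [abs_mul, abs_of_neg (by linarith), neg_sub]
  rw [habs] at hv
  refine ⟨_, ?_, hv⟩
  have hx : x ≠ 0 := by rintro rfl; simp at h
  have h0 : ¬ inOK0 a x := by
    rintro ⟨p, q, h2, h3⟩
    rw [hxy.unique ha ⟨p, q, h2, rfl⟩] at h
    linarith
  rw [thNorm1, if_neg hx, if_neg h0]

lemma inOK0.conj {a : ℕ} (ha : 3 ≤ a) {x : ℝ} (h : inOK0 a x) (hx : x ≠ 0) :
    ∃ y, ConjPair a x y ∧ 0 < x * y := by
  obtain ⟨p, q, h2, h3⟩ := h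
  have hc : ConjPair a x _ := ⟨p, q, h2, rfl⟩
  exact ⟨_, hc, lt_of_le_of_ne h3 (mul_ne_zero hx (hc.ne_zero ha hx)).symm⟩

lemma inOK1.conj {a : ℕ} (ha : 3 ≤ a) {x : ℝ} (h : inOK1 a x) (hx : x ≠ 0) :
    ∃ y, ConjPair a x y ∧ x * y < 0 := by
  obtain ⟨p, q, h2, h3⟩ := h
  have hc : ConjPair a x _ := ⟨p, q, h2, rfl⟩
  exact ⟨_, hc, lt_of_le_of_ne h3 (mul_ne_zero hx (hc.ne_zero ha hx))⟩

/-- Inequalities between integer parts of logarithms in base `t`, in multiplicative form. -/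
lemma floor_mul {t u v : ℝ} (ht : 1 < t) {m n k : ℤ} (hu : t ^ m ≤ u) (hu' : u < t ^ (m + 1))
    (hv : t ^ n ≤ v) (hv' : v < t ^ (n + 1)) (hk : t ^ k ≤ u * v) (hk' : u * v < t ^ (k + 1)) :
    t ^ m * t ^ n ≤ t ^ k ∧ t ^ k ≤ t * (t ^ m * t ^ n) := by
  have h0 : t ≠ 0 := by positivity
  have hp : ∀ i : ℤ, 0 < t ^ i := fun i => by positivity
  have h1 : t ^ (m + n) < t ^ (k + 1) := by
    rw [zpow_add₀ h0]
    exact (mul_le_mul hu hv (hp n).le ((hp m).le.trans hu)).trans_lt hk'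
  have h2 : t ^ k < t ^ ((m + 1) + (n + 1)) := by
    rw [zpow_add₀ h0 (m + 1)]
    exact hk.trans_lt (mul_lt_mul'' hu' hv' ((hp m).le.trans hu) ((hp n).le.trans hv))
  rw [zpow_lt_zpow_iff_right₀ ht] at h1 h2
  rw [← zpow_add₀ h0, ← zpow_one_add₀ h0]
  exact ⟨zpow_le_zpow_right₀ ht.le (by omega), zpow_le_zpow_right₀ ht.le (by omega)⟩

/-- Inframultiplicativity, norm `1` case. For nonzero `f, g ∈ ℤ[θ]`:
(1) if `f, g ∈ O_K⁰` then `|f|·|g| ≤ |fg| ≤ θ·|f|·|g|`;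
(2) if `f, g ∈ O_K¹` then `|f|·|g| ≤ |fg| ≤ θ²·|f|·|g|`;
(3) if `f ∈ O_K⁰` and `g ∈ O_K¹` then `|f|·|g| ≤ |fg| ≤ θ·|f|·|g|`. -/
theorem inframultiplicative_pos_one (a : ℕ) (ha : 3 ≤ a) (f g : ℝ)
    (hfne : f ≠ 0) (hgne : g ≠ 0) :
    ((inOK0 a f ∧ inOK0 a g) →
      thNorm1 a f * thNorm1 a g ≤ thNorm1 a (f * g) ∧
      thNorm1 a (f * g) ≤ theta1 a * (thNorm1 a f * thNorm1 a g)) ∧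
    ((inOK1 a f ∧ inOK1 a g) →
      thNorm1 a f * thNorm1 a g ≤ thNorm1 a (f * g) ∧
      thNorm1 a (f * g) ≤ theta1 a ^ 2 * (thNorm1 a f * thNorm1 a g)) ∧
    ((inOK0 a f ∧ inOK1 a g) →
      thNorm1 a f * thNorm1 a g ≤ thNorm1 a (f * g) ∧
      thNorm1 a (f * g) ≤ theta1 a * (thNorm1 a f * thNorm1 a g)) := by
  have h1 := theta_gt a ha
  have h0 : theta1 a ≠ 0 := by positivity
  refine ⟨?_, ?_, ?_⟩
  · rintro ⟨hf, hg⟩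
    obtain ⟨y, hy, hfy⟩ := hf.conj ha hfne
    obtain ⟨z, hz, hgz⟩ := hg.conj ha hgne
    obtain ⟨m, em, hm, hm'⟩ := thNorm_of_pos a ha _ _ hy hfy
    obtain ⟨n, en, hn, hn'⟩ := thNorm_of_pos a ha _ _ hz hgz
    obtain ⟨k, ek, hk, hk'⟩ := thNorm_of_pos a ha _ _ (hy.mul ha hz)
      (by linarith [mul_pos hfy hgz])
    rw [em, en, ek]
    rw [abs_mul] at hk hk'
    exact floor_mul h1 hm hm' hn hn' hk hk'
  · rintro ⟨hf, hg⟩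
    obtain ⟨y, hy, hfy⟩ := hf.conj ha hfne
    obtain ⟨z, hz, hgz⟩ := hg.conj ha hgne
    obtain ⟨m, em, hm, hm'⟩ := thNorm_of_neg a ha _ _ hy hfy
    obtain ⟨n, en, hn, hn'⟩ := thNorm_of_neg a ha _ _ hz hgz
    obtain ⟨k, ek, hk, hk'⟩ := thNorm_of_pos a ha _ _ (hy.mul ha hz)
      (by linarith [mul_pos_of_neg_of_neg hfy hgz])
    rw [em, en, ek]
    rw [abs_mul] at hk hk'
    have hi1 : (theta1 a)⁻¹ < 1 := inv_lt_one_of_one_lt₀ h1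
    have hi0 : 0 < (theta1 a)⁻¹ := by positivity
    -- `(1 - θ⁻¹)² = (a - 2) θ⁻¹`
    have hs : (theta1 a)⁻¹ ≤ (1 - (theta1 a)⁻¹) ^ 2 := by
      have hm : theta1 a * (theta1 a)⁻¹ = 1 := mul_inv_cancel₀ h0
      have h3 : (3 : ℝ) ≤ a := by exact_mod_cast ha
      have e : (1 - (theta1 a)⁻¹) ^ 2 = (a - 2) * (theta1 a)⁻¹ := by
        have := theta_inv a ha
        linear_combination (theta1 a)⁻¹ * this - hm
      rw [e]
      exact le_mul_of_one_le_left hi0.le (by linarith)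
    have hs1 : (1 - (theta1 a)⁻¹) ^ 2 ≤ 1 := by nlinarith
    set s := 1 - (theta1 a)⁻¹ with hsdef
    have hs0 : 0 < s := by rw [hsdef]; linarith
    have hyz : 0 ≤ |y| * |z| := by positivity
    have hmn : theta1 a ^ (m + n) ≤ s ^ 2 * (|y| * |z|) := by
      rw [zpow_add₀ h0]
      calc _ ≤ (s * |y|) * (s * |z|) := by gcongr
        _ = _ := by ring
    have hmn' : s ^ 2 * (|y| * |z|) < theta1 a ^ ((m + 1) + (n + 1)) := by
      rw [zpow_add₀ h0]
      calc _ = (s * |y|) * (s * |z|) := by ring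
        _ < _ := mul_lt_mul'' hm' hn' (by positivity) (by positivity)
    have e1 : theta1 a ^ (m + n) < theta1 a ^ (k + 1) :=
      (hmn.trans (mul_le_of_le_one_left hyz hs1)).trans_lt hk'
    have e2 : theta1 a ^ (k - 1) < theta1 a ^ ((m + 1) + (n + 1)) := by
      refine lt_of_le_of_lt ?_ hmn'
      rw [zpow_sub_one₀ h0, mul_comm]
      exact mul_le_mul hs hk (by positivity) (by positivity)
    rw [zpow_lt_zpow_iff_right₀ h1] at e1 e2
    have hsq : theta1 a ^ 2 = theta1 a ^ (2 : ℤ) := by norm_cast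
    rw [hsq, ← zpow_add₀ h0, ← zpow_add₀ h0]
    exact ⟨zpow_le_zpow_right₀ h1.le (by omega), zpow_le_zpow_right₀ h1.le (by omega)⟩
  · rintro ⟨hf, hg⟩
    obtain ⟨y, hy, hfy⟩ := hf.conj ha hfne
    obtain ⟨z, hz, hgz⟩ := hg.conj ha hgne
    obtain ⟨m, em, hm, hm'⟩ := thNorm_of_pos a ha _ _ hy hfy
    obtain ⟨n, en, hn, hn'⟩ := thNorm_of_neg a ha _ _ hz hgz
    obtain ⟨k, ek, hk, hk'⟩ := thNorm_of_neg a ha _ _ (hy.mul ha hz)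
      (by linarith [mul_neg_of_pos_of_neg hfy hgz])
    rw [em, en, ek]
    rw [abs_mul, mul_left_comm] at hk hk'
    exact floor_mul h1 hm hm' hn hn' hk hk'
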